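/- Let V be a finite-dimensional irreducible □_q-module of type 1 and diameter d. Then for each i ∈ ℤ/4ℤ, the actions A of x_i and A* of x_{i+2} on V form a q-geometric tridiagonal pair. That is: A and A* each act semisimply on V with set of distinct eigenvalues {q^{d−2n} : 0 ≤ n ≤ d}; writing V_n (resp. V*_n) for the eigenspace of A (resp. A*) with eigenvalue q^{d−2n}, one has A*V_n ⊆ V_{n−1} + V_n + V_{n+1} and A V*_n ⊆ V*_{n−1} + V*_n + V*_{n+1} for 0 ≤ n ≤ d (where V_{−1} = V_{d+1} = V*_{−1} = V*_{d+1} = 0); and there is no subspace W of V with AW ⊆ W, A*W ⊆ W, W ≠ 0, W ≠ V. -/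

import Mathlib

noncomputable section

open FreeAlgebra

variable (F : Type) [Field F]

/-- The defining relations of the algebra `□_q` (Terwilliger), on the free algebra
with generators `x_i`, `i ∈ ℤ/4ℤ`. -/
inductive BoxRel (q : F) : FreeAlgebra F (ZMod 4) → FreeAlgebra F (ZMod 4) → Prop
  | rel1 (i : ZMod 4) : BoxRel q
      (q • (ι F i * ι F (i + 1)) - q⁻¹ • (ι F (i + 1) * ι F i))
      ((q - q⁻¹) • (1 : FreeAlgebra F (ZMod 4)))
  | rel2 (i : ZMod 4) : BoxRel q
      (ι F i ^ 3 * ι F (i + 2) +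
        ((q ^ 3 - (q⁻¹) ^ 3) / (q - q⁻¹)) • (ι F i * ι F (i + 2) * ι F i ^ 2))
      (((q ^ 3 - (q⁻¹) ^ 3) / (q - q⁻¹)) • (ι F i ^ 2 * ι F (i + 2) * ι F i) +
        ι F (i + 2) * ι F i ^ 3)

/-- The algebra `□_q`, presented by generators and relations. -/
abbrev BoxQ (q : F) : Type := RingQuot (BoxRel F q)

/-- The generators `x_i` of `□_q`. -/
def bx (q : F) (i : ZMod 4) : BoxQ F q :=
  RingQuot.mkAlgHom F (BoxRel F q) (ι F i)

/-- `f` acts semisimply: `V` is spanned by the eigenspaces of `f`. -/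
def SemisimpleOn {V : Type} [AddCommGroup V] [Module F V] (f : Module.End F V) : Prop :=
  (⨆ θ : F, Module.End.eigenspace f θ) = ⊤

/-- The set of (distinct) eigenvalues of `f`. -/
def EigSet {V : Type} [AddCommGroup V] [Module F V] (f : Module.End F V) : Set F :=
  {θ : F | Module.End.eigenspace f θ ≠ ⊥}

/-- The representation `π` of `A` on `V` is irreducible. -/
def IsIrrep {A V : Type} [Ring A] [Algebra F A] [AddCommGroup V] [Module F V]
    (π : A →ₐ[F] Module.End F V) : Prop :=
  Nontrivial V ∧ ∀ W : Submodule F V, (∀ a : A, ∀ v ∈ W, π a v ∈ W) → W = ⊥ ∨ W = ⊤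

/-- Isomorphism of representations of `A`. -/
def RepIso {A V W : Type} [Ring A] [Algebra F A] [AddCommGroup V] [Module F V]
    [AddCommGroup W] [Module F W]
    (π : A →ₐ[F] Module.End F V) (π' : A →ₐ[F] Module.End F W) : Prop :=
  ∃ σ : V ≃ₗ[F] W, ∀ (a : A) (v : V), σ (π a v) = π' a (σ v)

/-- The `□_q`-module given by `π` has type `1` and diameter `d`: each generator `x_i`
acts semisimply with set of distinct eigenvalues `{q^(d-2n) : 0 ≤ n ≤ d}`. -/
def Type1Diam (q : F) {V : Type} [AddCommGroup V] [Module F V]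
    (π : BoxQ F q →ₐ[F] Module.End F V) (d : ℕ) : Prop :=
  ∀ i : ZMod 4, SemisimpleOn F (π (bx F q i)) ∧
    EigSet F (π (bx F q i)) =
      {θ : F | ∃ n : ℕ, n ≤ d ∧ θ = q ^ ((d : ℤ) - 2 * (n : ℤ))}

/-- Eigenspace of `f` with eigenvalue `q^(d-2n)`, for `n : ℤ`. -/
def eigD (q : F) {V : Type} [AddCommGroup V] [Module F V]
    (f : Module.End F V) (d : ℕ) (n : ℤ) : Submodule F V :=
  Module.End.eigenspace f (q ^ ((d : ℤ) - 2 * n))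

/-!
Call `(X, Y)` a `q`-Weyl pair if `qXY - q⁻¹YX = (q - q⁻¹)1`. Then `Y - θ⁻¹` maps the
`θ`-eigenspace of `X` into its `q⁻²θ`-eigenspace, so that the sum of the eigenspaces of `X` with
eigenvalue `q ^ a`, `a ≤ r`, lies in the sum of those of `Y` with eigenvalue `q ^ b`, `-r ≤ b`.

In the tridiagonal pair `A = x_i`, `A* = x_{i+2}`, the three-term condition is the cubic relation:
on the `θ`-eigenspace of `A` it says `(A - q²θ)(A - θ)(A - q⁻²θ)A* = 0`.

Irreducibility uses the `q`-Weyl relations with `B = x_{i+1}` and `C = x_{i+3}`. Let `W ≠ 0` be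
invariant under `A` and `A*`, and let `q ^ r`, `q ^ s` be the highest eigenvalues of `A`, `A*` on
it. The part of `W` in the `q ^ s`-eigenspace of `A*` lies in the sum of the `q ^ b`-eigenspaces of
`B` with `-r ≤ b` (compare with `A`) and `b ≤ -s` (compare with `A*`). Hence `s ≤ r`, and `r ≤ s`
by the same argument with `C`. So `r = s`, and `W` contains an eigenvector of `B`. The
span of the eigenvectors of `B` in `W` is again invariant under `A` and `A*`; if `W` is minimal, it
equals `W`, which is thus `B`-invariant. Likewise `W` is `C`-invariant, and so `W = V`.
-/

open Module.End (mem_eigenspace_iff)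

section LinearAlgebra

variable {K V : Type*} [Field K] [AddCommGroup V] [Module K V]

/-! ### Sums of eigenspaces -/

lemma biSup_inf_biSup_of_iSupIndep {ι α : Type*} [CompleteLattice α] [IsModularLattice α]
    [IsCompactlyGenerated α] {t : ι → α} (ht : iSupIndep t) (S T : Set ι) :
    (⨆ i ∈ S, t i) ⊓ (⨆ i ∈ T, t i) = ⨆ i ∈ S ∩ T, t i := by
  have hdisj : Disjoint (⨆ i ∈ S \ T, t i) (⨆ i ∈ T, t i) :=
    ht.disjoint_biSup_biSup Set.disjoint_sdiff_left
  have hle : ⨆ i ∈ S ∩ T, t i ≤ ⨆ i ∈ T, t i := biSup_mono fun _ hi => hi.2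
  rw [← Set.inter_union_sdiff S T, iSup_union, sup_inf_assoc_of_le _ hle, hdisj.eq_bot, sup_bot_eq,
    Set.inter_union_sdiff]

/-- The sum of the eigenspaces of `f` with eigenvalue in `S`. With `S` the set of the powers
`q ^ n` for `n ≤ r` or `r ≤ n`, these sums are the two flags attached to `f`. -/
def eigenspaceSum (f : Module.End K V) (S : Set K) : Submodule K V :=
  ⨆ μ ∈ S, f.eigenspace μ

lemma eigenspace_le_eigenspaceSum (f : Module.End K V) {S : Set K} {μ : K} (hμ : μ ∈ S) :
    f.eigenspace μ ≤ eigenspaceSum f S :=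
  le_biSup f.eigenspace hμ

lemma eigenspaceSum_mono (f : Module.End K V) {S T : Set K} (h : S ⊆ T) :
    eigenspaceSum f S ≤ eigenspaceSum f T :=
  biSup_mono h

lemma eigenspaceSum_empty (f : Module.End K V) : eigenspaceSum f ∅ = ⊥ :=
  iSup_emptyset

lemma eigenspaceSum_singleton (f : Module.End K V) (μ : K) :
    eigenspaceSum f {μ} = f.eigenspace μ :=
  iSup_singleton

lemma eigenspaceSum_insert (f : Module.End K V) (μ : K) (S : Set K) :
    eigenspaceSum f (insert μ S) = f.eigenspace μ ⊔ eigenspaceSum f S :=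
  iSup_insert

lemma eigenspaceSum_inf_eigenspaceSum (f : Module.End K V) (S T : Set K) :
    eigenspaceSum f S ⊓ eigenspaceSum f T = eigenspaceSum f (S ∩ T) :=
  biSup_inf_biSup_of_iSupIndep f.eigenspaces_iSupIndep S T

lemma eigenspaceSum_le_map_sub (f : Module.End K V) {S : Set K} {μ : K} (hμ : μ ∉ S) :
    eigenspaceSum f S ≤ (eigenspaceSum f S).map (f - μ • 1) := by
  refine iSup₂_le fun ν hν v hv => ?_
  have hne : ν - μ ≠ 0 := sub_ne_zero.mpr fun h => hμ (h ▸ hν)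
  refine ⟨(ν - μ)⁻¹ • v,
    Submodule.smul_mem _ _ (eigenspace_le_eigenspaceSum f hν hv), ?_⟩
  rw [map_smul, inv_smul_eq_iff₀ hne, sub_smul]
  simp [mem_eigenspace_iff.mp hv]

lemma mem_eigenspaceSum_insert_of_sub_mem (f : Module.End K V) {S : Set K} {μ : K} (hμ : μ ∉ S)
    {v : V} (hv : f v - μ • v ∈ eigenspaceSum f S) : v ∈ eigenspaceSum f (insert μ S) := by
  obtain ⟨u, hu, huv⟩ := eigenspaceSum_le_map_sub f hμ hv
  have hsub : v - u ∈ f.eigenspace μ := by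
    have huv' : f u - μ • u = f v - μ • v := by simpa using huv
    rw [mem_eigenspace_iff, map_sub, smul_sub, sub_eq_sub_iff_sub_eq_sub, huv']
  rw [eigenspaceSum_insert, ← sub_add_cancel v u]
  exact Submodule.add_mem_sup hsub hu

/-! ### `q`-Weyl pairs -/

/-- `(X, Y)` satisfies the `q`-Weyl relation `(qXY - q⁻¹YX) / (q - q⁻¹) = 1`, with the denominator
cleared. -/
def IsQWeylPair {A : Type*} [Ring A] [Algebra K A] (q : K) (X Y : A) : Prop :=
  q • (X * Y) - q⁻¹ • (Y * X) = (q - q⁻¹) • (1 : A)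

lemma ne_zero_of_zpow_injective {q : K} (hq : Function.Injective (q ^ · : ℤ → K)) : q ≠ 0 := by
  rintro rfl
  exact absurd (@hq 1 2 (by simp)) (by decide)

lemma inv_zpow_injective {q : K} (hq : Function.Injective (q ^ · : ℤ → K)) :
    Function.Injective (q⁻¹ ^ · : ℤ → K) := by
  simpa only [inv_zpow', Function.comp_def] using hq.comp neg_injective

lemma exists_eigenspace_zpow_eq_bot [FiniteDimensional K V] {q : K}
    (hq : Function.Injective (q ^ · : ℤ → K)) (f : Module.End K V) (a : ℤ) :
    ∃ k : ℕ, f.eigenspace (q ^ (a - 2 * k)) = ⊥ := by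
  by_contra! h
  have hinj : Function.Injective fun k : ℕ => q ^ (a - 2 * k) := fun k l hkl => by
    have := hq hkl
    omega
  exact Set.infinite_of_injective_forall_mem hinj h f.finite_hasEigenvalue

namespace IsQWeylPair

lemma swap {A : Type*} [Ring A] [Algebra K A] {q : K} {X Y : A} (h : IsQWeylPair q X Y) :
    IsQWeylPair q⁻¹ Y X := by
  rw [IsQWeylPair, inv_inv, ← neg_sub (q • _), h, ← neg_smul, neg_sub]

lemma map {A B : Type*} [Ring A] [Algebra K A] [Ring B] [Algebra K B] (φ : A →ₐ[K] B) {q : K}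
    {X Y : A} (h : IsQWeylPair q X Y) : IsQWeylPair q (φ X) (φ Y) := by
  simpa only [IsQWeylPair, map_sub, map_smul, map_mul, map_one] using congrArg φ h

variable {q : K} {X Y Z : Module.End K V}

lemma sub_mem_eigenspace (h : IsQWeylPair q X Y) (hq : q ≠ 0) {θ : K} (hθ : θ ≠ 0) {v : V}
    (hv : v ∈ X.eigenspace θ) : Y v - θ⁻¹ • v ∈ X.eigenspace (q⁻¹ ^ 2 * θ) := by
  have hXv : X v = θ • v := mem_eigenspace_iff.mp hv
  have hrel : q • X (Y v) - q⁻¹ • θ • Y v = (q - q⁻¹) • v := by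
    simpa [hXv] using congrArg (fun g : Module.End K V => g v) h
  have hXY : X (Y v) = q⁻¹ • (q⁻¹ • θ • Y v + (q - q⁻¹) • v) := by
    rw [eq_inv_smul_iff₀ hq, ← hrel, add_sub_cancel]
  rw [mem_eigenspace_iff, map_sub, map_smul, hXv, hXY]
  match_scalars <;> field_simp
  ring

lemma eigenspace_zpow_le [FiniteDimensional K V] (h : IsQWeylPair q X Y)
    (hq : Function.Injective (q ^ · : ℤ → K)) (a : ℤ) :
    X.eigenspace (q ^ a) ≤ eigenspaceSum Y ((q ^ ·) '' Set.Ici (-a)) := by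
  have hq0 := ne_zero_of_zpow_injective hq
  obtain ⟨k, hk⟩ := exists_eigenspace_zpow_eq_bot hq X a
  induction k generalizing a with
  | zero => simp_all
  | succ k ih =>
    intro v hv
    have hlower : Y v - q ^ (-a) • v ∈ X.eigenspace (q ^ (a - 2)) := by
      convert h.sub_mem_eigenspace hq0 (zpow_ne_zero a hq0) hv using 2
      · rw [zpow_sub₀ hq0, div_eq_inv_mul, inv_pow, zpow_ofNat]
      · rw [zpow_neg]
    have hmem := ih (a - 2) (by rw [← hk]; congr 2; push_cast; ring) hlower
    have hnot : q ^ (-a) ∉ (q ^ · : ℤ → K) '' Set.Ici (-(a - 2)) := by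
      rw [hq.mem_set_image, Set.mem_Ici]
      omega
    refine eigenspaceSum_mono Y ?_ (mem_eigenspaceSum_insert_of_sub_mem Y hnot hmem)
    rw [← Set.image_insert_eq (f := (q ^ · : ℤ → K))]
    exact Set.image_mono (Set.insert_subset (by simp) (Set.Ici_subset_Ici.mpr (by omega)))

lemma eigenspace_zpow_le_right [FiniteDimensional K V] (h : IsQWeylPair q X Y)
    (hq : Function.Injective (q ^ · : ℤ → K)) (a : ℤ) :
    Y.eigenspace (q ^ a) ≤ eigenspaceSum X ((q ^ ·) '' Set.Iic (-a)) := by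
  have hle := h.swap.eigenspace_zpow_le (inv_zpow_injective hq) (-a)
  rw [inv_zpow', neg_neg] at hle
  refine hle.trans (eigenspaceSum_mono X ?_)
  rintro _ ⟨b, hb, rfl⟩
  exact ⟨-b, Set.mem_Iic.mpr (neg_le_neg hb), (inv_zpow' q b).symm⟩

lemma eigenspaceSum_Iic_le [FiniteDimensional K V] (h : IsQWeylPair q X Y)
    (hq : Function.Injective (q ^ · : ℤ → K)) (r : ℤ) :
    eigenspaceSum X ((q ^ ·) '' Set.Iic r) ≤ eigenspaceSum Y ((q ^ ·) '' Set.Ici (-r)) := by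
  refine iSup₂_le ?_
  rintro _ ⟨a, ha, rfl⟩
  exact (h.eigenspace_zpow_le hq a).trans
    (eigenspaceSum_mono Y (Set.image_mono (Set.Ici_subset_Ici.mpr (neg_le_neg ha))))

lemma eigenspaceSum_Iic_inf_eigenspace_le [FiniteDimensional K V] (hXY : IsQWeylPair q X Y)
    (hYZ : IsQWeylPair q Y Z) (hq : Function.Injective (q ^ · : ℤ → K)) (r s : ℤ) :
    eigenspaceSum X ((q ^ ·) '' Set.Iic r) ⊓ Z.eigenspace (q ^ s) ≤
      eigenspaceSum Y ((q ^ ·) '' Set.Icc (-r) (-s)) := by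
  rw [← Set.Ici_inter_Iic, Set.image_inter hq, ← eigenspaceSum_inf_eigenspaceSum]
  exact inf_le_inf (hXY.eigenspaceSum_Iic_le hq r) (hYZ.eigenspace_zpow_le_right hq s)

end IsQWeylPair

/-! ### Invariant subspaces of a cycle of `q`-Weyl pairs -/

/-- The span of the eigenvectors of `f` in `W` whose eigenvalue is nonzero. Other operators in a
`q`-Weyl pair with `f` need not preserve the corresponding span that includes the kernel of `f`. -/
def eigenCore (f : Module.End K V) (W : Submodule K V) : Submodule K V :=
  ⨆ μ : Kˣ, W ⊓ f.eigenspace (μ : K)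

lemma inf_eigenspace_le_eigenCore (f : Module.End K V) (W : Submodule K V) {μ : K} (hμ : μ ≠ 0) :
    W ⊓ f.eigenspace μ ≤ eigenCore f W :=
  le_iSup (fun μ : Kˣ => W ⊓ f.eigenspace (μ : K)) (Units.mk0 μ hμ)

lemma eigenCore_le (f : Module.End K V) (W : Submodule K V) : eigenCore f W ≤ W :=
  iSup_le fun _ => inf_le_left

lemma eigenCore_mem_invtSubmodule_self (f : Module.End K V) (W : Submodule K V) :
    eigenCore f W ∈ f.invtSubmodule := by
  refine (Module.End.mem_invtSubmodule f).mpr (iSup_le fun μ v hv => ?_)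
  rw [Submodule.mem_comap, mem_eigenspace_iff.mp hv.2]
  exact Submodule.smul_mem _ _ (inf_eigenspace_le_eigenCore f W μ.ne_zero hv)

lemma IsQWeylPair.eigenCore_mem_invtSubmodule {q : K} (hq : q ≠ 0) {X Y : Module.End K V}
    (h : IsQWeylPair q X Y) {W : Submodule K V} (hW : W ∈ Y.invtSubmodule) :
    eigenCore X W ∈ Y.invtSubmodule := by
  refine (Module.End.mem_invtSubmodule Y).mpr (iSup_le fun μ v hv => ?_)
  have hshift : Y v - (μ : K)⁻¹ • v ∈ W ⊓ X.eigenspace (q⁻¹ ^ 2 * μ) :=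
    ⟨sub_mem (hW hv.1) (W.smul_mem _ hv.1), h.sub_mem_eigenspace hq μ.ne_zero hv.2⟩
  rw [Submodule.mem_comap, ← sub_add_cancel (Y v) ((μ : K)⁻¹ • v)]
  exact add_mem
    (inf_eigenspace_le_eigenCore X W
      (mul_ne_zero (pow_ne_zero 2 (inv_ne_zero hq)) μ.ne_zero) hshift)
    (Submodule.smul_mem _ _ (inf_eigenspace_le_eigenCore X W μ.ne_zero hv))

/-- `f` is diagonalizable and all its eigenvalues are integral powers of `q`. This is what type 1
asks of each generator, apart from the range of the exponents. -/
def IsZPowDiagonalizable (q : K) (f : Module.End K V) : Prop :=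
  ⨆ μ, f.eigenspace μ = ⊤ ∧ ∀ μ, f.HasEigenvalue μ → ∃ a : ℤ, q ^ a = μ

section Cycle

variable [FiniteDimensional K V] {q : K} {A A' B C : Module.End K V} {W : Submodule K V}

lemma IsZPowDiagonalizable.exists_highest (hq : Function.Injective (q ^ · : ℤ → K))
    (hA : IsZPowDiagonalizable q A) (hWA : W ∈ A.invtSubmodule) (hW : W ≠ ⊥) :
    ∃ r : ℤ, W ≤ eigenspaceSum A ((q ^ ·) '' Set.Iic r) ∧ W ⊓ A.eigenspace (q ^ r) ≠ ⊥ := by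
  have hdecomp : W = ⨆ μ, W ⊓ A.eigenspace μ := Submodule.eq_iSup_inf_genEigenspace 1 hWA hA.1
  have heig : ∀ μ, W ⊓ A.eigenspace μ ≠ ⊥ → A.HasEigenvalue μ := fun μ hμ =>
    ne_bot_of_le_ne_bot hμ inf_le_right
  let weights : Set ℤ := {a | W ⊓ A.eigenspace (q ^ a) ≠ ⊥}
  have hfinite : weights.Finite :=
    (A.finite_hasEigenvalue.preimage hq.injOn).subset fun a ha => heig (q ^ a) ha
  have hnonempty : weights.Nonempty := by
    by_contra! hempty
    refine hW (hdecomp.trans (iSup_eq_bot.mpr fun μ => ?_))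
    by_contra hμ
    obtain ⟨a, rfl⟩ := hA.2 μ (heig μ hμ)
    exact hempty.subset hμ
  obtain ⟨r, hr, hmax⟩ := Set.exists_max_image weights id hfinite hnonempty
  refine ⟨r, hdecomp.trans_le (iSup_le fun μ => ?_), hr⟩
  by_cases hμ : W ⊓ A.eigenspace μ = ⊥
  · exact hμ.trans_le bot_le
  · obtain ⟨a, rfl⟩ := hA.2 μ (heig μ hμ)
    exact inf_le_right.trans (eigenspace_le_eigenspaceSum A ⟨a, hmax a hμ, rfl⟩)

lemma IsQWeylPair.le_of_inf_eigenspace_ne_bot (hAB : IsQWeylPair q A B) (hBA' : IsQWeylPair q B A')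
    (hq : Function.Injective (q ^ · : ℤ → K)) {r s : ℤ}
    (hr : W ≤ eigenspaceSum A ((q ^ ·) '' Set.Iic r)) (hs : W ⊓ A'.eigenspace (q ^ s) ≠ ⊥) :
    s ≤ r := by
  by_contra! hrs
  have hle := (inf_le_inf_right _ hr).trans (hAB.eigenspaceSum_Iic_inf_eigenspace_le hBA' hq r s)
  rw [Set.Icc_eq_empty (by omega), Set.image_empty, eigenspaceSum_empty] at hle
  exact hs (le_bot_iff.mp hle)

lemma eigenCore_ne_bot (hq : Function.Injective (q ^ · : ℤ → K))
    (hAB : IsQWeylPair q A B) (hBA' : IsQWeylPair q B A')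
    (hA'C : IsQWeylPair q A' C) (hCA : IsQWeylPair q C A)
    (hA : IsZPowDiagonalizable q A) (hA' : IsZPowDiagonalizable q A')
    (hWA : W ∈ A.invtSubmodule) (hWA' : W ∈ A'.invtSubmodule) (hW : W ≠ ⊥) :
    eigenCore B W ≠ ⊥ := by
  obtain ⟨r, hr, hr'⟩ := hA.exists_highest hq hWA hW
  obtain ⟨s, hs, hs'⟩ := hA'.exists_highest hq hWA' hW
  obtain rfl : r = s := le_antisymm (hA'C.le_of_inf_eigenspace_ne_bot hCA hq hs hr')
    (hAB.le_of_inf_eigenspace_ne_bot hBA' hq hr hs')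
  have hB : W ⊓ A'.eigenspace (q ^ r) ≤ B.eigenspace (q ^ (-r)) := by
    have hle := hAB.eigenspaceSum_Iic_inf_eigenspace_le hBA' hq r r
    rw [Set.Icc_self, Set.image_singleton, eigenspaceSum_singleton] at hle
    exact (inf_le_inf_right _ hr).trans hle
  have hcore := (le_inf inf_le_left hB).trans
    (inf_eigenspace_le_eigenCore B W (zpow_ne_zero (-r) (ne_zero_of_zpow_injective hq)))
  exact ne_bot_of_le_ne_bot hs' hcore

lemma mem_invtSubmodule_of_minimal (hq : Function.Injective (q ^ · : ℤ → K))
    (hAB : IsQWeylPair q A B) (hBA' : IsQWeylPair q B A')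
    (hA'C : IsQWeylPair q A' C) (hCA : IsQWeylPair q C A)
    (hA : IsZPowDiagonalizable q A) (hA' : IsZPowDiagonalizable q A')
    (hW : Minimal (fun U => U ≠ ⊥ ∧ U ∈ A.invtSubmodule ⊓ A'.invtSubmodule) W) :
    W ∈ B.invtSubmodule := by
  obtain ⟨hW0, hWA, hWA'⟩ := hW.prop
  have hq0 := ne_zero_of_zpow_injective hq
  have hcoreA : eigenCore B W ∈ A.invtSubmodule :=
    hAB.swap.eigenCore_mem_invtSubmodule (inv_ne_zero hq0) hWA
  have hcoreA' : eigenCore B W ∈ A'.invtSubmodule :=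
    hBA'.eigenCore_mem_invtSubmodule hq0 hWA'
  have hcore : eigenCore B W = W := hW.eq_of_le
    ⟨eigenCore_ne_bot hq hAB hBA' hA'C hCA hA hA' hWA hWA' hW0, hcoreA, hcoreA'⟩
    (eigenCore_le B W)
  exact hcore ▸ eigenCore_mem_invtSubmodule_self B W

lemma exists_le_forall_mem_invtSubmodule (hq : Function.Injective (q ^ · : ℤ → K))
    {X : ZMod 4 → Module.End K V} (hX : ∀ i, IsQWeylPair q (X i) (X (i + 1)))
    (hdiag : ∀ i, IsZPowDiagonalizable q (X i)) (i : ZMod 4) (hW : W ≠ ⊥)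
    (hWi : W ∈ (X i).invtSubmodule) (hWi' : W ∈ (X (i + 2)).invtSubmodule) :
    ∃ U ≤ W, U ≠ ⊥ ∧ ∀ j, U ∈ (X j).invtSubmodule := by
  obtain ⟨U, hUW, hU⟩ := exists_minimal_le_of_wellFoundedLT
    (fun U => U ≠ ⊥ ∧ U ∈ (X i).invtSubmodule ⊓ (X (i + 2)).invtSubmodule) W ⟨hW, hWi, hWi'⟩
  have h12 : IsQWeylPair q (X (i + 1)) (X (i + 2)) := by
    simpa only [add_assoc, one_add_one_eq_two] using hX (i + 1)
  have h23 : IsQWeylPair q (X (i + 2)) (X (i + 3)) := by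
    simpa only [add_assoc, two_add_one_eq_three] using hX (i + 2)
  have h30 : IsQWeylPair q (X (i + 3)) (X i) := by
    simpa only [add_assoc, show (3 + 1 : ZMod 4) = 0 from rfl, add_zero] using hX (i + 3)
  have hU1 : U ∈ (X (i + 1)).invtSubmodule :=
    mem_invtSubmodule_of_minimal hq (hX i) h12 h23 h30 (hdiag i) (hdiag (i + 2)) hU
  have hU3 : U ∈ (X (i + 3)).invtSubmodule :=
    mem_invtSubmodule_of_minimal hq h23 h30 (hX i) h12 (hdiag (i + 2)) (hdiag i)
      (by rwa [inf_comm])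
  have hcases : ∀ i j : ZMod 4, j = i ∨ j = i + 1 ∨ j = i + 2 ∨ j = i + 3 := by decide
  refine ⟨U, hUW, hU.prop.1, fun j => ?_⟩
  rcases hcases i j with rfl | rfl | rfl | rfl
  exacts [hU.prop.2.1, hU1, hU.prop.2.2, hU3]

end Cycle

/-! ### The cubic relation -/

lemma qInteger_three {q : K} (hq : q ≠ 0) (hq2 : q ^ 2 ≠ 1) :
    (q ^ 3 - q⁻¹ ^ 3) / (q - q⁻¹) = q ^ 2 + 1 + q⁻¹ ^ 2 := by
  have hsub : q - q⁻¹ ≠ 0 := fun h => hq2 (by field_simp at h; linear_combination h)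
  rw [div_eq_iff hsub]
  field_simp
  ring

/-- `(X, Y)` satisfies the cubic `q`-Serre relation
`X³Y - [3]X²YX + [3]XYX² - YX³ = 0`, with the negative terms moved to the right. -/
def IsQSerrePair {A : Type*} [Ring A] [Algebra K A] (q : K) (X Y : A) : Prop :=
  X ^ 3 * Y + ((q ^ 3 - q⁻¹ ^ 3) / (q - q⁻¹)) • (X * Y * X ^ 2) =
    ((q ^ 3 - q⁻¹ ^ 3) / (q - q⁻¹)) • (X ^ 2 * Y * X) + Y * X ^ 3

namespace IsQSerrePair

lemma map {A B : Type*} [Ring A] [Algebra K A] [Ring B] [Algebra K B] (φ : A →ₐ[K] B) {q : K}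
    {X Y : A} (h : IsQSerrePair q X Y) : IsQSerrePair q (φ X) (φ Y) := by
  simpa only [IsQSerrePair, map_add, map_smul, map_mul, map_pow] using congrArg φ h

lemma apply_mem_eigenspaceSum {q : K} {X Y : Module.End K V} (h : IsQSerrePair q X Y)
    (hq0 : q ≠ 0) (hq4 : q ^ 4 ≠ 1) {θ : K} (hθ : θ ≠ 0) {v : V} (hv : v ∈ X.eigenspace θ) :
    Y v ∈ eigenspaceSum X {q ^ 2 * θ, θ, q⁻¹ ^ 2 * θ} := by
  have hq2 : q ^ 2 ≠ 1 := fun h2 => hq4 (by linear_combination (q ^ 2 + 1) * h2)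
  have hXv : X v = θ • v := mem_eigenspace_iff.mp hv
  have hrel : X (X (X (Y v))) + (q ^ 2 + 1 + q⁻¹ ^ 2) • θ • θ • X (Y v) =
      (q ^ 2 + 1 + q⁻¹ ^ 2) • θ • X (X (Y v)) + θ • θ • θ • Y v := by
    rw [IsQSerrePair, qInteger_three hq0 hq2] at h
    simpa [pow_succ, hXv] using congrArg (fun g : Module.End K V => g v) h
  have hcubic : X (X (X (Y v))) = (q ^ 2 + 1 + q⁻¹ ^ 2) • θ • X (X (Y v)) + θ • θ • θ • Y v -
      (q ^ 2 + 1 + q⁻¹ ^ 2) • θ • θ • X (Y v) := eq_sub_of_add_eq hrel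
  have hinv : q⁻¹ ^ 2 * q ^ 2 = 1 := by rw [← mul_pow, inv_mul_cancel₀ hq0, one_pow]
  have hmiddle : θ ∉ ({q⁻¹ ^ 2 * θ} : Set K) := fun hmem =>
    hq2 (mul_right_cancel₀ hθ
      (by linear_combination q ^ 2 * Set.mem_singleton_iff.mp hmem + θ * hinv))
  have htop : q ^ 2 * θ ∉ ({θ, q⁻¹ ^ 2 * θ} : Set K) := by
    rintro (hmem | hmem)
    · exact hq2 (mul_right_cancel₀ hθ (by linear_combination hmem))
    · exact hq4 (mul_right_cancel₀ hθ
        (by linear_combination q ^ 2 * Set.mem_singleton_iff.mp hmem + θ * hinv))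
  refine mem_eigenspaceSum_insert_of_sub_mem X htop
    (mem_eigenspaceSum_insert_of_sub_mem X hmiddle ?_)
  rw [eigenspaceSum_singleton, mem_eigenspace_iff]
  simp only [map_sub, map_smul, hcubic]
  match_scalars <;> field_simp <;> ring

end IsQSerrePair

end LinearAlgebra

/-! ### Representations of `□_q` -/

section Box

variable {F}

lemma zpow_injective_of_forall_pow_ne_one {q : F} (hq0 : q ≠ 0)
    (hq1 : ∀ n : ℕ, 0 < n → q ^ n ≠ 1) : Function.Injective (q ^ · : ℤ → F) := by
  have hord : ¬ IsOfFinOrder (Units.mk0 q hq0) := by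
    rw [isOfFinOrder_iff_pow_eq_one]
    rintro ⟨n, hn, h⟩
    exact hq1 n hn (by simpa using congrArg Units.val h)
  exact fun a b hab => injective_zpow_iff_not_isOfFinOrder.mpr hord (Units.ext (by simpa using hab))

lemma isQWeylPair_bx (q : F) (i : ZMod 4) : IsQWeylPair q (bx F q i) (bx F q (i + 1)) := by
  simpa only [IsQWeylPair, bx, map_sub, map_smul, map_mul, map_one] using
    RingQuot.mkAlgHom_rel F (BoxRel.rel1 (F := F) (q := q) i)

lemma isQSerrePair_bx (q : F) (i : ZMod 4) : IsQSerrePair q (bx F q i) (bx F q (i + 2)) := by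
  simpa only [IsQSerrePair, bx, map_add, map_smul, map_mul, map_pow] using
    RingQuot.mkAlgHom_rel F (BoxRel.rel2 (F := F) (q := q) i)

variable {q : F} {V : Type} [AddCommGroup V] [Module F V] {π : BoxQ F q →ₐ[F] Module.End F V}
  {d : ℕ}

lemma mem_invtSubmodule_of_forall_bx {W : Submodule F V}
    (h : ∀ j, W ∈ (π (bx F q j)).invtSubmodule) (a : BoxQ F q) : W ∈ (π a).invtSubmodule := by
  obtain ⟨x, rfl⟩ := RingQuot.mkAlgHom_surjective F (BoxRel F q) a
  induction x using FreeAlgebra.induction with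
  | grade0 r =>
    intro v hv
    rw [AlgHom.commutes, AlgHom.commutes]
    exact W.smul_mem r hv
  | grade1 j => exact h j
  | mul x y hx hy =>
    rw [map_mul, map_mul]
    exact fun v hv => hx (hy hv)
  | add x y hx hy =>
    rw [map_add, map_add]
    exact fun v hv => W.add_mem (hx hv) (hy hv)

lemma Type1Diam.isZPowDiagonalizable (hT : Type1Diam F q π d) (i : ZMod 4) :
    IsZPowDiagonalizable q (π (bx F q i)) := by
  refine ⟨(hT i).1, fun μ hμ => ?_⟩
  obtain ⟨n, -, rfl⟩ := (hT i).2.subset hμ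
  exact ⟨_, rfl⟩

lemma bx_apply_mem_sup_eigD (hq0 : q ≠ 0) (hq4 : q ^ 4 ≠ 1) (i : ZMod 4) {n : ℤ} {v : V}
    (hv : v ∈ eigD F q (π (bx F q i)) d n) :
    π (bx F q (i + 2)) v ∈
      eigD F q (π (bx F q i)) d (n - 1) ⊔ eigD F q (π (bx F q i)) d n ⊔
        eigD F q (π (bx F q i)) d (n + 1) := by
  have hprev : q ^ ((d : ℤ) - 2 * (n - 1)) = q ^ 2 * q ^ ((d : ℤ) - 2 * n) := by
    rw [← zpow_natCast, ← zpow_add₀ hq0]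
    congr 1
    push_cast
    ring
  have hnext : q ^ ((d : ℤ) - 2 * (n + 1)) = q⁻¹ ^ 2 * q ^ ((d : ℤ) - 2 * n) := by
    rw [inv_pow, ← zpow_natCast, ← zpow_neg, ← zpow_add₀ hq0]
    congr 1
    push_cast
    ring
  have hmem := ((isQSerrePair_bx q i).map π).apply_mem_eigenspaceSum hq0 hq4
    (zpow_ne_zero _ hq0) hv
  rwa [eigenspaceSum_insert, eigenspaceSum_insert, eigenspaceSum_singleton, ← sup_assoc, ← hprev,
    ← hnext] at hmem

lemma IsIrrep.eq_top_of_bx_invariant [FiniteDimensional F V] (hirr : IsIrrep F π)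
    (hq : Function.Injective (q ^ · : ℤ → F)) (hT : Type1Diam F q π d) (i : ZMod 4)
    {W : Submodule F V} (hW : W ≠ ⊥) (hWi : W ∈ (π (bx F q i)).invtSubmodule)
    (hWi' : W ∈ (π (bx F q (i + 2))).invtSubmodule) : W = ⊤ := by
  obtain ⟨U, hUW, hU0, hU⟩ := exists_le_forall_mem_invtSubmodule hq
    (fun j => (isQWeylPair_bx q j).map π) hT.isZPowDiagonalizable i hW hWi hWi'
  have hU_top : U = ⊤ :=
    (hirr.2 U fun a _ hv => mem_invtSubmodule_of_forall_bx hU a hv).resolve_left hU0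
  exact top_le_iff.mp (hU_top ▸ hUW)

end Box

theorem stmt14_general (q : F) (hq0 : q ≠ 0)
    (hq1 : ∀ n : ℕ, 0 < n → q ^ n ≠ 1)
    (V : Type) [AddCommGroup V] [Module F V] [FiniteDimensional F V]
    (π : BoxQ F q →ₐ[F] Module.End F V) (hirr : IsIrrep F π)
    (d : ℕ) (hT : Type1Diam F q π d) :
    ∀ i : ZMod 4,
      SemisimpleOn F (π (bx F q i)) ∧
      SemisimpleOn F (π (bx F q (i + 2))) ∧
      EigSet F (π (bx F q i)) =
        {θ : F | ∃ n : ℕ, n ≤ d ∧ θ = q ^ ((d : ℤ) - 2 * (n : ℤ))} ∧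
      EigSet F (π (bx F q (i + 2))) =
        {θ : F | ∃ n : ℕ, n ≤ d ∧ θ = q ^ ((d : ℤ) - 2 * (n : ℤ))} ∧
      (∀ n : ℤ, 0 ≤ n → n ≤ (d : ℤ) → ∀ v ∈ eigD F q (π (bx F q i)) d n,
        π (bx F q (i + 2)) v ∈
          eigD F q (π (bx F q i)) d (n - 1) ⊔ eigD F q (π (bx F q i)) d n ⊔
            eigD F q (π (bx F q i)) d (n + 1)) ∧
      (∀ n : ℤ, 0 ≤ n → n ≤ (d : ℤ) → ∀ v ∈ eigD F q (π (bx F q (i + 2))) d n,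
        π (bx F q i) v ∈
          eigD F q (π (bx F q (i + 2))) d (n - 1) ⊔ eigD F q (π (bx F q (i + 2))) d n ⊔
            eigD F q (π (bx F q (i + 2))) d (n + 1)) ∧
      ¬ ∃ W : Submodule F V,
          (∀ v ∈ W, π (bx F q i) v ∈ W) ∧ (∀ v ∈ W, π (bx F q (i + 2)) v ∈ W) ∧
          W ≠ ⊥ ∧ W ≠ ⊤ := by
  intro i
  have hq := zpow_injective_of_forall_pow_ne_one hq0 hq1
  have hq4 : q ^ 4 ≠ 1 := hq1 4 (by norm_num)
  have hi : i + 2 + 2 = i := by rw [add_assoc, show (2 + 2 : ZMod 4) = 0 from rfl, add_zero]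
  refine ⟨(hT i).1, (hT (i + 2)).1, (hT i).2, (hT (i + 2)).2,
    fun n _ _ v hv => bx_apply_mem_sup_eigD hq0 hq4 i hv, fun n _ _ v hv => ?_, ?_⟩
  · simpa only [hi] using bx_apply_mem_sup_eigD hq0 hq4 (i + 2) hv
  · rintro ⟨W, hWi, hWi', hW0, hW⟩
    exact hW (hirr.eq_top_of_bx_invariant hq hT i hW0 hWi hWi')

/-- On a type-1 irreducible `□_q`-module of diameter `d`, the generators
`x_i, x_{i+2}` act as a `q`-geometric tridiagonal pair. -/
theorem stmt14 [IsAlgClosed F] [CharZero F] (q : F) (hq0 : q ≠ 0)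
    (hq1 : ∀ n : ℕ, 0 < n → q ^ n ≠ 1)
    (V : Type) [AddCommGroup V] [Module F V] [FiniteDimensional F V]
    (π : BoxQ F q →ₐ[F] Module.End F V) (hirr : IsIrrep F π)
    (d : ℕ) (hT : Type1Diam F q π d) :
    ∀ i : ZMod 4,
      SemisimpleOn F (π (bx F q i)) ∧
      SemisimpleOn F (π (bx F q (i + 2))) ∧
      EigSet F (π (bx F q i)) =
        {θ : F | ∃ n : ℕ, n ≤ d ∧ θ = q ^ ((d : ℤ) - 2 * (n : ℤ))} ∧
      EigSet F (π (bx F q (i + 2))) =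
        {θ : F | ∃ n : ℕ, n ≤ d ∧ θ = q ^ ((d : ℤ) - 2 * (n : ℤ))} ∧
      (∀ n : ℤ, 0 ≤ n → n ≤ (d : ℤ) → ∀ v ∈ eigD F q (π (bx F q i)) d n,
        π (bx F q (i + 2)) v ∈
          eigD F q (π (bx F q i)) d (n - 1) ⊔ eigD F q (π (bx F q i)) d n ⊔
            eigD F q (π (bx F q i)) d (n + 1)) ∧
      (∀ n : ℤ, 0 ≤ n → n ≤ (d : ℤ) → ∀ v ∈ eigD F q (π (bx F q (i + 2))) d n,
        π (bx F q i) v ∈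
          eigD F q (π (bx F q (i + 2))) d (n - 1) ⊔ eigD F q (π (bx F q (i + 2))) d n ⊔
            eigD F q (π (bx F q (i + 2))) d (n + 1)) ∧
      ¬ ∃ W : Submodule F V,
          (∀ v ∈ W, π (bx F q i) v ∈ W) ∧ (∀ v ∈ W, π (bx F q (i + 2)) v ∈ W) ∧
          W ≠ ⊥ ∧ W ≠ ⊤ :=
  stmt14_general F q hq0 hq1 V π hirr d hT
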